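/- arXiv:2503.17264 — 4 statements merged into one kernel-verified Lean document; each statement's English description precedes it below -/
import Mathlib

section
/- (Work function lower bound on OPT, Lemma 2.3.) Let n ≥ 2, let π₀ be an initial configuration of n items, and let σ = (σ₁,…,σ_T) be any request sequence. For each unordered pair {x,y} of distinct items, let W_xy be the two-item work function for the request sequence σ_xy with initial configuration b₀ = (π₀(x) < π₀(y)), and let w(σ_xy) = (W_xy(σ_xy, true) + W_xy(σ_xy, false))/2. Then Σ over all unordered pairs {x,y} of ( w(σ_xy) − 1/2 ) is at most OPT(σ). -/
/-!
The lower bound is the pairwise decomposition of the cost of a schedule. With uniform swap costs both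
the access cost `π r` and the distance `dPerm` are sums over unordered pairs of items: `π r` counts the
items in front of `r` (`sum_pairAcc`), and `dPerm` counts the inverted pairs. Hence `costN` is the sum
over pairs of the costs `pairCost` of the induced two-item schedules (`sum_pairCost`).

On a fixed pair, the induced two-item schedule is a candidate in the minimum defining the work function,
except that it may change configuration while some third item is requested. Such a move is paid for by
the Lipschitz property `Wrev b₀ τ c ≤ Wrev b₀ τ b + d2 b c` (`Wrev_lipschitz`). So the work function
at the final configuration is at most the pair cost (`Wrev_le_pairCost`), and by the same property the
average over the two configurations exceeds it by at most `1/2` (`wavg_sub_half_le`). Summing over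
the pairs for an optimal schedule gives the claim.
-/

/-- Access cost of a request `r` in a two-item configuration `b`. -/
def acc2 (r b : Bool) : ℕ := if b = r then 0 else 1

/-- Reordering cost between two-item configurations. -/
def d2 (b b' : Bool) : ℕ := if b = b' then 0 else 1

/-- Auxiliary work function, processing the request sequence from the most
    recent request (head) to the oldest one. -/
def Wrev (b₀ : Bool) : List Bool → Bool → ℕ
  | [], b => d2 b₀ b
  | r :: τ, b =>
      min (Wrev b₀ τ true + acc2 r true + d2 true b)
          (Wrev b₀ τ false + acc2 r false + d2 false b)

/-- The two-item work function: `W b₀ σ b` is the optimal cost of serving `σ`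
    starting from configuration `b₀` and ending in configuration `b`.  It
    satisfies `W b₀ [] b = d2 b₀ b` and
    `W b₀ (σ ++ [r]) b = min over b' of (W b₀ σ b' + acc2 r b' + d2 b' b)`. -/
def W (b₀ : Bool) (σ : List Bool) (b : Bool) : ℕ := Wrev b₀ σ.reverse b

/-- The averaged work function `w = (W(σ,true) + W(σ,false))/2`, as a rational. -/
def wavg (b₀ : Bool) (σ : List Bool) : ℚ :=
  ((W b₀ σ true : ℚ) + (W b₀ σ false : ℚ)) / 2

/-- Number of unordered pairs of items whose relative order differs between
    configurations `π` and `ρ` (minimum number of adjacent swaps). -/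
def dPerm {n : ℕ} (π ρ : Equiv.Perm (Fin n)) : ℕ :=
  ((Finset.univ : Finset (Fin n × Fin n)).filter
    (fun p => p.1 < p.2 ∧ ¬((π p.1 < π p.2) ↔ (ρ p.1 < ρ p.2)))).card

/-- Cost of serving the request sequence `σ` starting at time `t` with the
    schedule of configurations `ρ`, in the partial access cost model with
    uniform swap costs. -/
def costN {n : ℕ} (ρ : ℕ → Equiv.Perm (Fin n)) : List (Fin n) → ℕ → ℕ
  | [], _ => 0
  | r :: σ, t => ((ρ t) r : ℕ) + dPerm (ρ t) (ρ (t + 1)) + costN ρ σ (t + 1)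

/-- Optimal offline cost with initial configuration `π₀`. -/
noncomputable def OPT {n : ℕ} (π₀ : Equiv.Perm (Fin n)) (σ : List (Fin n)) : ℕ :=
  sInf {c | ∃ ρ : ℕ → Equiv.Perm (Fin n), ρ 0 = π₀ ∧ c = costN ρ σ 0}

/-- The subsequence of `σ` on the pair `{x, y}`, encoded as Booleans
    (`true` for `x`). -/
def proj {n : ℕ} (x y : Fin n) (σ : List (Fin n)) : List Bool :=
  σ.filterMap (fun r => if r = x then some true else if r = y then some false else none)

/-- Relative order of the pair `p` in `π`: `true` if `p.1` precedes `p.2`. -/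
def ord {n : ℕ} (π : Equiv.Perm (Fin n)) (p : Fin n × Fin n) : Bool :=
  decide (π p.1 < π p.2)

/-- Contribution of the pair `p` to the cost of accessing `r` in `π`: it is `1` when `r` is the item
of `p` that stands behind the other one. -/
def pairAcc {n : ℕ} (π : Equiv.Perm (Fin n)) (r : Fin n) (p : Fin n × Fin n) : ℕ :=
  if (r = p.1 ∧ π p.2 < π p.1) ∨ (r = p.2 ∧ π p.1 < π p.2) then 1 else 0

/-- Contribution of the pair `p` to `costN ρ σ t`. -/
def pairCost {n : ℕ} (ρ : ℕ → Equiv.Perm (Fin n)) (p : Fin n × Fin n) : List (Fin n) → ℕ → ℕ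
  | [], _ => 0
  | r :: σ, t =>
      pairAcc (ρ t) r p + d2 (ord (ρ t) p) (ord (ρ (t + 1)) p) + pairCost ρ p σ (t + 1)

lemma Wrev_lipschitz (b₀ : Bool) (τ : List Bool) (b c : Bool) :
    Wrev b₀ τ c ≤ Wrev b₀ τ b + d2 b c := by
  cases τ <;> cases b₀ <;> cases b <;> cases c <;> simp [Wrev, d2] <;> omega

lemma Wrev_cons_le (b₀ r : Bool) (τ : List Bool) (b c : Bool) :
    Wrev b₀ (r :: τ) c ≤ Wrev b₀ τ b + acc2 r b + d2 b c := by
  cases b <;> simp [Wrev]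

/-- The access cost `π r` is the number of pairs in which `r` stands behind its partner: the item `z`
preceding `r` corresponds to the pair `{z, r}`. -/
lemma sum_pairAcc {n : ℕ} (π : Equiv.Perm (Fin n)) (r : Fin n) :
    ∑ p ∈ (Finset.univ : Finset (Fin n × Fin n)).filter (fun p => p.1 < p.2), pairAcc π r p
      = (π r : ℕ) := by
  have h : (Finset.univ.filter (fun z => π z < π r)).card = (π r : ℕ) := by
    rw [← Fin.card_Iio (π r)]
    refine Finset.card_bij (fun z _ => π z) (by simp) (fun _ _ _ _ h => π.injective h) ?_
    intro b hb
    exact ⟨π.symm b, by simpa using hb, by simp⟩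
  unfold pairAcc
  rw [← h, ← Finset.card_filter, Finset.filter_filter]
  symm
  refine Finset.card_bij (fun z _ => (min z r, max z r)) ?_ ?_ ?_
  · intro z hz
    simp only [Finset.mem_filter, Finset.mem_univ, true_and] at hz ⊢
    have hne : z ≠ r := by rintro rfl; exact lt_irrefl _ hz
    rcases lt_or_gt_of_ne hne with h1 | h1
    · simp [min_eq_left h1.le, max_eq_right h1.le, h1, hz]
    · simp [min_eq_right h1.le, max_eq_left h1.le, h1, hz]
  · intro a _ b _ hab
    simp only [Prod.mk.injEq] at hab
    grind
  · rintro ⟨x, y⟩ hp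
    simp only [Finset.mem_filter, Finset.mem_univ, true_and] at hp
    obtain ⟨hxy, ⟨rfl, h1⟩ | ⟨rfl, h1⟩⟩ := hp
    · exact ⟨y, by simpa using h1, by simp [hxy.le]⟩
    · exact ⟨x, by simpa using h1, by simp [hxy.le]⟩

lemma sum_d2_ord {n : ℕ} (π ρ : Equiv.Perm (Fin n)) :
    ∑ p ∈ (Finset.univ : Finset (Fin n × Fin n)).filter (fun p => p.1 < p.2),
      d2 (ord π p) (ord ρ p) = dPerm π ρ := by
  unfold dPerm
  rw [← Finset.filter_filter, Finset.card_filter]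
  refine Finset.sum_congr rfl fun p _ => ?_
  by_cases h1 : π p.1 < π p.2 <;> by_cases h2 : ρ p.1 < ρ p.2 <;> simp [d2, ord, h1, h2]

lemma sum_pairCost {n : ℕ} (ρ : ℕ → Equiv.Perm (Fin n)) (σ : List (Fin n)) (t : ℕ) :
    ∑ p ∈ (Finset.univ : Finset (Fin n × Fin n)).filter (fun p => p.1 < p.2), pairCost ρ p σ t
      = costN ρ σ t := by
  induction σ generalizing t with
  | nil => simp [pairCost, costN]
  | cons r σ ih =>
    simp only [pairCost, costN, Finset.sum_add_distrib, ih, sum_pairAcc, sum_d2_ord]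

/-- The work function at the end of a schedule is bounded by its value at time `t`, after the
requests `τ` (latest first), plus the pair cost of the remaining schedule. -/
lemma Wrev_le_pairCost {n : ℕ} (ρ : ℕ → Equiv.Perm (Fin n)) (p : Fin n × Fin n) (hp : p.1 < p.2)
    (b₀ : Bool) (σ : List (Fin n)) (t : ℕ) (τ : List Bool) :
    Wrev b₀ ((proj p.1 p.2 σ).reverse ++ τ) (ord (ρ (t + σ.length)) p)
      ≤ Wrev b₀ τ (ord (ρ t) p) + pairCost ρ p σ t := by
  induction σ generalizing t τ with
  | nil => simp [proj, pairCost]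
  | cons r σ ih =>
    have hlen : t + (r :: σ).length = t + 1 + σ.length := by simp; omega
    have hne : ρ t p.1 ≠ ρ t p.2 := fun h => hp.ne ((ρ t).injective h)
    rw [hlen]
    simp only [pairCost]
    by_cases h1 : r = p.1
    · have hproj : (proj p.1 p.2 (r :: σ)).reverse ++ τ
          = (proj p.1 p.2 σ).reverse ++ (true :: τ) := by simp [proj, h1]
      have hacc : acc2 true (ord (ρ t) p) = pairAcc (ρ t) r p := by
        rcases lt_or_gt_of_ne hne with h | h <;>
          simp [acc2, ord, pairAcc, h1, hp.ne, h, not_lt_of_gt h]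
      rw [hproj]
      have := ih (t + 1) (true :: τ)
      have := Wrev_cons_le b₀ true τ (ord (ρ t) p) (ord (ρ (t + 1)) p)
      omega
    · by_cases h2 : r = p.2
      · have hproj : (proj p.1 p.2 (r :: σ)).reverse ++ τ
            = (proj p.1 p.2 σ).reverse ++ (false :: τ) := by simp [proj, h2, hp.ne']
        have hacc : acc2 false (ord (ρ t) p) = pairAcc (ρ t) r p := by
          rcases lt_or_gt_of_ne hne with h | h <;>
            simp [acc2, ord, pairAcc, h2, hp.ne', h, not_lt_of_gt h]
        rw [hproj]
        have := ih (t + 1) (false :: τ)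
        have := Wrev_cons_le b₀ false τ (ord (ρ t) p) (ord (ρ (t + 1)) p)
        omega
      · have hproj : proj p.1 p.2 (r :: σ) = proj p.1 p.2 σ := by simp [proj, h1, h2]
        rw [hproj]
        have := ih (t + 1) τ
        have := Wrev_lipschitz b₀ τ (ord (ρ t) p) (ord (ρ (t + 1)) p)
        omega

lemma wavg_sub_half_le {n : ℕ} (ρ : ℕ → Equiv.Perm (Fin n)) (p : Fin n × Fin n) (hp : p.1 < p.2)
    (σ : List (Fin n)) :
    wavg (ord (ρ 0) p) (proj p.1 p.2 σ) - 1/2 ≤ (pairCost ρ p σ 0 : ℚ) := by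
  have h := Wrev_le_pairCost ρ p hp (ord (ρ 0) p) σ 0 []
  rw [List.append_nil] at h
  have h0 : Wrev (ord (ρ 0) p) [] (ord (ρ 0) p) = 0 := by simp [Wrev, d2]
  rw [h0] at h
  have ht := Wrev_lipschitz (ord (ρ 0) p) (proj p.1 p.2 σ).reverse false true
  have hf := Wrev_lipschitz (ord (ρ 0) p) (proj p.1 p.2 σ).reverse true false
  have key : W (ord (ρ 0) p) (proj p.1 p.2 σ) true + W (ord (ρ 0) p) (proj p.1 p.2 σ) false
      ≤ 2 * pairCost ρ p σ 0 + 1 := by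
    unfold W
    generalize ord (ρ (0 + σ.length)) p = c at h
    cases c <;> simp [d2] at ht hf <;> omega
  have key' : (W (ord (ρ 0) p) (proj p.1 p.2 σ) true : ℚ)
      + W (ord (ρ 0) p) (proj p.1 p.2 σ) false ≤ 2 * pairCost ρ p σ 0 + 1 := by
    exact_mod_cast key
  unfold wavg
  linarith

/-- Work function lower bound on OPT (Lemma 2.3): the sum over unordered pairs
    of distinct items of `w(σ_xy) - 1/2` is at most `OPT(σ)`. -/
theorem work_function_lower_bound (n : ℕ) (hn : 2 ≤ n)
    (π₀ : Equiv.Perm (Fin n)) (σ : List (Fin n)) :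
    ∑ p ∈ (Finset.univ : Finset (Fin n × Fin n)).filter (fun p => p.1 < p.2),
      (wavg (decide (π₀ p.1 < π₀ p.2)) (proj p.1 p.2 σ) - 1/2)
      ≤ (OPT π₀ σ : ℚ) := by
  obtain ⟨ρ, hρ, hc⟩ : OPT π₀ σ ∈ {c | ∃ ρ : ℕ → Equiv.Perm (Fin n), ρ 0 = π₀ ∧ c = costN ρ σ 0} :=
    Nat.sInf_mem ⟨_, fun _ => π₀, rfl, rfl⟩
  rw [hc, ← sum_pairCost, Nat.cast_sum]
  refine Finset.sum_le_sum fun p hp => ?_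
  rw [← hρ]
  exact wavg_sub_half_le ρ p (Finset.mem_filter.mp hp).2 σ
end

section
/- (Arithmetic core of Lemma 4.8.) Let G_PM = (1/16)·(25−√17, 43−3√17, 1+7√17, 63−7√17, 23+√17, 0), G_FM = (1/16)·(37+3√17, 27−3√17, 5+3√17, 31−7√17, 23+√17, 0), and G_OPT = (1/2, 1/2, 1/2, 1/2, 1/2, 0), all vectors in ℝ⁶, and let R = (23+√17)/8. Then for every vector V ∈ ℝ⁶ with all entries nonnegative, min( ⟨G_PM, V⟩, ⟨G_FM, V⟩ ) ≤ R · ⟨G_OPT, V⟩, where ⟨·,·⟩ denotes the sum over the six coordinates of the products of corresponding entries. -/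
/-!
The vector `R • GOPT` lies on the segment between `GPM` and `GFM`: with `t = (3 + √17) / 2 > 0`
one has `t • GPM + GFM = (1 + t) • R • GOPT`, by a computation using only `√17 ^ 2 = 17`.
So `R * ⟨GOPT, V⟩` is a weighted average of `⟨GPM, V⟩` and `⟨GFM, V⟩`, hence at least their
minimum.
-/

open Real

noncomputable def GPM : Fin 6 → ℝ :=
  ![(25 - Real.sqrt 17) / 16, (43 - 3 * Real.sqrt 17) / 16, (1 + 7 * Real.sqrt 17) / 16,
    (63 - 7 * Real.sqrt 17) / 16, (23 + Real.sqrt 17) / 16, 0]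

noncomputable def GFM : Fin 6 → ℝ :=
  ![(37 + 3 * Real.sqrt 17) / 16, (27 - 3 * Real.sqrt 17) / 16, (5 + 3 * Real.sqrt 17) / 16,
    (31 - 7 * Real.sqrt 17) / 16, (23 + Real.sqrt 17) / 16, 0]

noncomputable def GOPT : Fin 6 → ℝ :=
  ![1 / 2, 1 / 2, 1 / 2, 1 / 2, 1 / 2, 0]

theorem combination_eq (i : Fin 6) :
    (3 + Real.sqrt 17) / 2 * GPM i + GFM i
      = (1 + (3 + Real.sqrt 17) / 2) * ((23 + Real.sqrt 17) / 8 * GOPT i) := by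
  have hs : Real.sqrt 17 ^ 2 = 17 := Real.sq_sqrt (by norm_num)
  fin_cases i <;> simp [GPM, GFM, GOPT] <;> grind

/-- Arithmetic core of Lemma 4.8: for every entrywise-nonnegative `V ∈ ℝ⁶`,
    `min(⟨G_PM, V⟩, ⟨G_FM, V⟩) ≤ R · ⟨G_OPT, V⟩` with `R = (23 + √17)/8`. -/
theorem arithmetic_core (V : Fin 6 → ℝ) (hV : ∀ i, 0 ≤ V i) :
    min (∑ i, GPM i * V i) (∑ i, GFM i * V i)
      ≤ ((23 + Real.sqrt 17) / 8) * ∑ i, GOPT i * V i := by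
  have hs : 0 ≤ Real.sqrt 17 := Real.sqrt_nonneg 17
  have key : (3 + Real.sqrt 17) / 2 * ∑ i, GPM i * V i + ∑ i, GFM i * V i
      = (1 + (3 + Real.sqrt 17) / 2) * ((23 + Real.sqrt 17) / 8 * ∑ i, GOPT i * V i) := by
    simp only [Finset.mul_sum, ← Finset.sum_add_distrib]
    refine Finset.sum_congr rfl fun i _ => ?_
    linear_combination V i * combination_eq i
  by_contra! h
  obtain ⟨h₁, h₂⟩ := lt_min_iff.mp h
  nlinarith [mul_pos (by positivity : 0 < (3 + Real.sqrt 17) / 2) (sub_pos.mpr h₁)]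
end

section
/- (Observation 2.2: average work function increases by 1/2 exactly at mode changes.) Fix an initial two-item configuration b₀ and let w(σ) = (W(σ, true) + W(σ, false))/2 ∈ ℚ. For every finite Boolean request sequence σ and every request r: w(σ ++ [r]) − w(σ) ∈ {0, 1/2}; moreover, w(σ ++ [r]) − w(σ) = 1/2 if and only if the integer W(σ ++ [r], true) − W(σ ++ [r], false) differs from the integer W(σ, true) − W(σ, false). -/
/-- Recursion of the work function on appending a request, as in its mathematical definition. -/
lemma W_append (b₀ : Bool) (σ : List Bool) (r b : Bool) :
    W b₀ (σ ++ [r]) b =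
      min (W b₀ σ true + acc2 r true + d2 true b) (W b₀ σ false + acc2 r false + d2 false b) := by
  simp [W, Wrev]

/-- The work function is 1-Lipschitz with respect to `d2`. -/
lemma W_le_W_not_add_one (b₀ : Bool) (σ : List Bool) (b : Bool) :
    W b₀ σ b ≤ W b₀ σ (!b) + 1 := by
  induction σ using List.reverseRecOn with
  | nil => cases b₀ <;> cases b <;> simp [W, Wrev, d2]
  | append_singleton σ r _ =>
    rw [W_append, W_append]
    cases b <;> simp [d2] <;> omega

/-- A request leaves the work function unchanged at the requested item. -/
lemma W_append_self (b₀ : Bool) (σ : List Bool) (r : Bool) :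
    W b₀ (σ ++ [r]) r = W b₀ σ r := by
  have h := W_le_W_not_add_one b₀ σ r
  rw [W_append]
  cases r <;> simp [d2, acc2] at h ⊢ <;> omega

lemma W_append_not (b₀ : Bool) (σ : List Bool) (r : Bool) :
    W b₀ (σ ++ [r]) (!r) = min (W b₀ σ r) (W b₀ σ (!r)) + 1 := by
  rw [W_append]
  cases r <;> simp [d2, acc2] <;> omega

/-- The unrequested item's value is either unchanged or increased by one. -/
lemma W_append_not_eq_or (b₀ : Bool) (σ : List Bool) (r : Bool) :
    W b₀ (σ ++ [r]) (!r) = W b₀ σ (!r) ∨ W b₀ (σ ++ [r]) (!r) = W b₀ σ (!r) + 1 := by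
  have h := W_le_W_not_add_one b₀ σ (!r)
  rw [Bool.not_not] at h
  rw [W_append_not]
  omega

/-- Observation 2.2: the average work function increases by `1/2` exactly at
    mode changes, and otherwise does not change. -/
theorem average_work_function_step (b₀ : Bool) (σ : List Bool) (r : Bool) :
    (wavg b₀ (σ ++ [r]) - wavg b₀ σ = 0 ∨ wavg b₀ (σ ++ [r]) - wavg b₀ σ = 1 / 2) ∧
    (wavg b₀ (σ ++ [r]) - wavg b₀ σ = 1 / 2 ↔
      (W b₀ (σ ++ [r]) true : ℤ) - (W b₀ (σ ++ [r]) false : ℤ)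
        ≠ (W b₀ σ true : ℤ) - (W b₀ σ false : ℤ)) := by
  have hs := W_append_self b₀ σ r
  unfold wavg
  rcases W_append_not_eq_or b₀ σ r with hn | hn <;> cases r <;>
    simp only [Bool.not_true, Bool.not_false] at hn <;> rw [hs, hn]
  · norm_num
  · norm_num
  all_goals
    push_cast
    refine ⟨Or.inr (by ring), iff_of_true (by ring) (by omega)⟩
end

section
/- (Asymptotic ratio in the lower bound for Deterministic Bit in the full cost model.) Let c = (5 − √13)/3. Then 0 < c < 1, and the sequence of real numbers f(n) = ( n²·(6 − 4c + c²/2) + n·(3c/2 − 2) ) / ( n²·(2 − 2c + c²) + n·(2 − c) ) tends to (3 + √13)/2 as n → ∞; moreover (3 + √13)/2 > 3.302. -/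
/-! The limit is the ratio of the coefficients of `n ^ 2` (`tendsto_quadratic_ratio`). Its value
follows from `(√13) ^ 2 = 13`, and the numerical bounds from `3.604 < √13 < 4`. -/

open Filter

/-- Both polynomials have no constant term, so dividing through by `n ^ 2` leaves affine
functions of `1 / n`. -/
lemma tendsto_quadratic_ratio (a b d e : ℝ) (hd : d ≠ 0) :
    Tendsto (fun n : ℕ => ((n : ℝ) ^ 2 * a + (n : ℝ) * b) / ((n : ℝ) ^ 2 * d + (n : ℝ) * e))
      atTop (nhds (a / d)) := by
  have h0 : Tendsto (fun n : ℕ => (n : ℝ)⁻¹) atTop (nhds 0) :=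
    tendsto_inv_atTop_zero.comp tendsto_natCast_atTop_atTop
  have h1 : Tendsto (fun n : ℕ => (a + (n : ℝ)⁻¹ * b) / (d + (n : ℝ)⁻¹ * e)) atTop
      (nhds ((a + 0 * b) / (d + 0 * e))) :=
    ((h0.mul_const b).const_add a).div ((h0.mul_const e).const_add d) (by simpa using hd)
  simp only [zero_mul, add_zero] at h1
  refine h1.congr' ?_
  filter_upwards [eventually_gt_atTop 0] with n hn
  have hn' : (n : ℝ) ≠ 0 := by positivity
  rw [← mul_div_mul_left _ _ (pow_ne_zero 2 hn')]
  congr 1 <;> field_simp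

/-- Asymptotic ratio in the lower bound for Deterministic Bit in the full cost
    model: with `c = (5 − √13)/3`, we have `0 < c < 1`, the ratio of costs
    tends to `(3 + √13)/2`, and `(3 + √13)/2 > 3.302`. -/
theorem dbit_full_cost_ratio :
    (0 < (5 - Real.sqrt 13) / 3) ∧ ((5 - Real.sqrt 13) / 3 < 1) ∧
    Tendsto
      (fun n : ℕ =>
        ((n : ℝ) ^ 2 * (6 - 4 * ((5 - Real.sqrt 13) / 3) + ((5 - Real.sqrt 13) / 3) ^ 2 / 2)
            + (n : ℝ) * (3 * ((5 - Real.sqrt 13) / 3) / 2 - 2)) /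
        ((n : ℝ) ^ 2 * (2 - 2 * ((5 - Real.sqrt 13) / 3) + ((5 - Real.sqrt 13) / 3) ^ 2)
            + (n : ℝ) * (2 - (5 - Real.sqrt 13) / 3)))
      atTop (nhds ((3 + Real.sqrt 13) / 2)) ∧
    (3 + Real.sqrt 13) / 2 > 3.302 := by
  have hs : Real.sqrt 13 ^ 2 = 13 := Real.sq_sqrt (by norm_num)
  have hlo : 3.604 < Real.sqrt 13 := Real.lt_sqrt_of_sq_lt (by norm_num)
  have hhi : Real.sqrt 13 < 4 := (Real.sqrt_lt' (by norm_num)).2 (by norm_num)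
  refine ⟨by linarith, by linarith, ?_, by linarith⟩
  -- `2 - 2c + c² = (1 - c)² + 1`
  have hd : 2 - 2 * ((5 - Real.sqrt 13) / 3) + ((5 - Real.sqrt 13) / 3) ^ 2 ≠ 0 := by
    nlinarith [sq_nonneg (1 - (5 - Real.sqrt 13) / 3)]
  convert tendsto_quadratic_ratio _ _ _ _ hd using 2
  rw [eq_div_iff hd]
  linear_combination (Real.sqrt 13 / 18 - 1 / 9) * hs
end
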